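/- For every unordered forest h over the unary signature, the polynomial φ(root(h)) = 2 + x·φ(h) is irreducible in ℚ[x]. -/

import Mathlib

/-! The encoding `φ(h)` is the image of an integer polynomial `ψ(h)`, defined by the same recursion.
By induction `ψ(h)` is monic, and modulo `2` it is a power of `X`, since
`2 + X * ψ(c) ≡ X * ψ(c)` and products of powers of `X` are powers of `X`.
Hence `2 + X * ψ(h)` is monic with constant term `2` and all its non-leading coefficients are even:
it is irreducible over `ℤ` by Eisenstein's criterion at `2`, and over `ℚ` by Gauss's lemma. -/

/-- Raw unordered forests over the unary signature: a forest is a finite list of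
trees, where `PF.node c r` denotes the forest `{root(c)} + r` (the tree whose
multiset of children is `c`, added to the forest `r`), and `PF.empty` is the
empty forest.  Unordered forests are obtained by quotienting by `PF.Peq`. -/
inductive PF : Type
  | empty : PF
  | node : PF → PF → PF

namespace PF

/-- Multiset union of forests. -/
def union : PF → PF → PF
  | empty, g => g
  | node c r, g => node c (union r g)

/-- The singleton forest `root(h)`, whose unique tree has the forest `h` as its
multiset of children. -/
def root (h : PF) : PF := node h empty

/-- Equality of raw forests as unordered forests: the smallest congruence
(with respect to the tree/forest structure) that allows swapping adjacent
trees of a forest.  Two raw forests are `Peq`-related exactly when they denote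
the same unordered forest (the same multiset of unordered trees). -/
inductive Peq : PF → PF → Prop
  | refl (h : PF) : Peq h h
  | symm {h h' : PF} : Peq h h' → Peq h' h
  | trans {h₁ h₂ h₃ : PF} : Peq h₁ h₂ → Peq h₂ h₃ → Peq h₁ h₃
  | congr {c c' r r' : PF} : Peq c c' → Peq r r' → Peq (node c r) (node c' r')
  | swap (c c' r : PF) : Peq (node c (node c' r)) (node c' (node c r))

/-- The encoding `φ` of unordered forests into `ℚ[x]` : `φ(∅) = 1`,
`φ(h + h') = φ(h)·φ(h')` and `φ(root(h)) = 2 + x·φ(h)`. -/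
noncomputable def phi : PF → Polynomial ℚ
  | empty => 1
  | node c r => (2 + Polynomial.X * phi c) * phi r

end PF

namespace PF

open Polynomial

/-- The encoding `φ` with integer coefficients. -/
noncomputable def psi : PF → ℤ[X]
  | empty => 1
  | node c r => (2 + X * psi c) * psi r

theorem map_psi (h : PF) : (psi h).map (algebraMap ℤ ℚ) = phi h := by
  induction h with
  | empty => simp [psi, phi]
  | node c r hc hr => simp [psi, phi, ← hc, ← hr]

theorem monic_two_add_X_mul {p : ℤ[X]} (hp : p.Monic) : (2 + X * p).Monic := by
  refine (monic_X.mul hp).add_of_right ?_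
  have h2 : (2 : ℤ[X]).degree ≤ 0 := degree_C_le (a := (2 : ℤ))
  refine h2.trans_lt ?_
  rw [← natDegree_pos_iff_degree_pos, monic_X.natDegree_mul hp, natDegree_X]
  lia

theorem monic_psi (h : PF) : (psi h).Monic := by
  induction h with
  | empty => exact monic_one
  | node c r hc hr => exact (monic_two_add_X_mul hc).mul hr

theorem map_two_add_X_mul (p : ℤ[X]) :
    (2 + X * p).map (Int.castRingHom (ZMod 2)) = X * p.map (Int.castRingHom (ZMod 2)) := by
  have h2 : (2 : (ZMod 2)[X]) = 0 := CharTwo.two_eq_zero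
  simp [h2]

theorem exists_map_psi_eq_X_pow (h : PF) :
    ∃ n : ℕ, (psi h).map (Int.castRingHom (ZMod 2)) = X ^ n := by
  induction h with
  | empty => exact ⟨0, by simp [psi]⟩
  | node c r hc hr =>
    obtain ⟨m, hm⟩ := hc
    obtain ⟨n, hn⟩ := hr
    refine ⟨m + 1 + n, ?_⟩
    rw [psi, Polynomial.map_mul, map_two_add_X_mul, hm, hn]
    ring

theorem irreducible_two_add_X_mul_psi (h : PF) : Irreducible (2 + X * psi h) := by
  have hmon := monic_two_add_X_mul (monic_psi h)
  obtain ⟨n, hn⟩ := exists_map_psi_eq_X_pow h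
  have hmap : (2 + X * psi h).map (Int.castRingHom (ZMod 2)) = X ^ (n + 1) := by
    rw [map_two_add_X_mul, hn]
    ring
  -- Reduction preserves the degree of a monic polynomial.
  have hdeg : (2 + X * psi h).natDegree = n + 1 := by
    rw [← hmon.natDegree_map (Int.castRingHom (ZMod 2)), hmap, natDegree_X_pow]
  have hprime : (Ideal.span {(2 : ℤ)}).IsPrime :=
    (Ideal.span_singleton_prime two_ne_zero).2 Int.prime_two
  have heis : (2 + X * psi h).IsEisensteinAt (Ideal.span {(2 : ℤ)}) := by
    refine hmon.isEisensteinAt_of_mem_of_notMem hprime.ne_top (fun {k} hk => ?_) ?_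
    · have hc := congrArg (fun q => q.coeff k) hmap
      simp only [coeff_map, coeff_X_pow, eq_intCast] at hc
      rw [if_neg (by lia), ZMod.intCast_zmod_eq_zero_iff_dvd] at hc
      exact Ideal.mem_span_singleton.2 (by exact_mod_cast hc)
    · rw [Ideal.span_singleton_pow, Ideal.mem_span_singleton]
      simp
  exact heis.irreducible hprime hmon.isPrimitive (by lia)

end PF

/-- For every unordered forest `h` over the unary signature,
the polynomial `φ(root(h)) = 2 + x·φ(h)` is irreducible in `ℚ[x]`. -/
theorem phi_root_irreducible :
    ∀ h : PF, Irreducible ((2 : Polynomial ℚ) + Polynomial.X * PF.phi h) := by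
  intro h
  have hQ := ((PF.monic_two_add_X_mul (PF.monic_psi h)).irreducible_iff_irreducible_map_fraction_map
    (K := ℚ)).1 (PF.irreducible_two_add_X_mul_psi h)
  simpa [← PF.map_psi h] using hQ
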